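/- Let K be a number field, f ∈ O_K[X] monic squarefree of odd degree at least 3, and S a finite set of nonzero primes of O_K such that O := O_{K,S} is a PID. Let A, B, C ∈ O[X] with B² − A·C = f, [A,2B,C] primitive over O[X], and A coprime to f in K[X]. Assume [A,2B,C] is not in the principal genus over K[X], i.e. there exist no ε ∈ Kˣ and p ∈ K[X] with f dividing A − ε·p² in K[X]. Then the set of n ∈ O such that the specialized form [A(n), 2B(n), C(n)] is not GL₂ᵗʷ-equivalent over O to the principal form [1, 0, −f(n)] is infinite. -/

import Mathlib

/-!
An equivalence whose matrix has determinant `u` makes `[1, 0, -f(n)]` represent `u A(n)`, hence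
`t A(n)` for every `t` in the class of `u` modulo squares. Finite generation of the `S`-units leaves
finitely many `t`, and by the Chinese remainder theorem it suffices to find, for each `t`,
infinitely many primes `q` with a residue class modulo `q` on which `t A(n)` is not represented.

Being outside the principal genus means that `t A` is not a square modulo `f`, hence not modulo
some irreducible factor of `f`: it takes a nonsquare value `α` at a root `θ` of `f` in a number
field `L`. Let `P` be a prime of `L` of norm a rational prime `q`, outside a finite bad set,
modulo which `α` is not a square. For integers `n ≡ θ` modulo `P` we have `f(n) ≡ 0` and
`t A(n) ≡ α`, so `t A(n) = x² - f(n) y²` is impossible.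

There are infinitely many such `P`: otherwise almost all primes of degree one split in
`M = L(√α)`, so `ζ_L²` is bounded by a constant times `ζ_M` on `s > 1`, contradicting the orders
of the poles at `s = 1`. Thus only the poles of Dedekind zeta functions are needed,
and not Chebotarev.
-/

open Polynomial IsDedekindDomain NumberField

/-- The ring of `S`-integers of a number field `K`. -/
noncomputable abbrev SInt (K : Type*) [Field K] [NumberField K]
    (S : Finset (HeightOneSpectrum (𝓞 K))) : Type _ :=
  ((S : Set (HeightOneSpectrum (𝓞 K))).integer K)

section EulerSum

open scoped ENNReal

variable {ι κ : Type*}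

/-- The sum of `∏ w i` over all finite multisets of indices, that is, the Euler product
`∏ᵢ (1 - w i)⁻¹` multiplied out. Working in `ℝ≥0∞` makes it meaningful without any convergence
hypothesis. -/
noncomputable def eulerSum (w : ι → ℝ≥0∞) : ℝ≥0∞ :=
  ∑' m : Multiset ι, (m.map w).prod

lemma eulerSum_comp_le {g : ι → κ} (hg : Function.Injective g) (w : κ → ℝ≥0∞) :
    eulerSum (w ∘ g) ≤ eulerSum w := by
  simpa [eulerSum, Multiset.map_map] using ENNReal.tsum_comp_le_tsum_of_injective
    (Multiset.map_injective hg) fun m : Multiset κ => (m.map w).prod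

lemma eulerSum_mono {v w : ι → ℝ≥0∞} (h : ∀ i, v i ≤ w i) : eulerSum v ≤ eulerSum w :=
  ENNReal.tsum_le_tsum fun _ =>
    Multiset.prod_map_le_prod_map₀ _ _ (fun _ _ => zero_le) fun i _ => h i

lemma eulerSum_comp_equiv (e : ι ≃ κ) (w : κ → ℝ≥0∞) : eulerSum (w ∘ e) = eulerSum w :=
  le_antisymm (eulerSum_comp_le e.injective w) <| by
    simpa [Function.comp_assoc] using eulerSum_comp_le e.symm.injective (w ∘ e)

lemma multiset_filterMap_none (m : Multiset ι) :
    m.filterMap (fun _ => (none : Option κ)) = 0 :=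
  Multiset.eq_zero_of_forall_notMem fun _ => by simp

lemma bijective_multiset_map_inl_add_map_inr : Function.Bijective
    fun p : Multiset ι × Multiset κ => p.1.map (Sum.inl : ι → ι ⊕ κ) + p.2.map Sum.inr := by
  constructor
  · rintro ⟨a, b⟩ ⟨c, d⟩ h
    have left := congrArg (Multiset.filterMap Sum.getLeft?) h
    have right := congrArg (Multiset.filterMap Sum.getRight?) h
    simp only [Multiset.filterMap_add, Multiset.filterMap_map, Function.comp_def,
      Sum.getLeft?_inl, Sum.getLeft?_inr, Sum.getRight?_inl, Sum.getRight?_inr,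
      multiset_filterMap_none, Multiset.filterMap_some, add_zero, zero_add] at left right
    rw [left, right]
  · intro m
    induction m using Multiset.induction with
    | empty => exact ⟨(0, 0), by simp⟩
    | cons a s ih =>
      obtain ⟨⟨x, y⟩, rfl⟩ := ih
      rcases a with a | a
      · exact ⟨(a ::ₘ x, y), by simp⟩
      · exact ⟨(x, a ::ₘ y), by simp⟩

lemma eulerSum_sum (w : ι ⊕ κ → ℝ≥0∞) :
    eulerSum w = eulerSum (w ∘ Sum.inl) * eulerSum (w ∘ Sum.inr) := by
  calc eulerSum w
      = ∑' p : Multiset ι × Multiset κ,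
          (p.1.map (w ∘ Sum.inl)).prod * (p.2.map (w ∘ Sum.inr)).prod := by
        rw [eulerSum, ← (Equiv.ofBijective _ bijective_multiset_map_inl_add_map_inr).tsum_eq]
        simp [Multiset.map_map]
    _ = eulerSum (w ∘ Sum.inl) * eulerSum (w ∘ Sum.inr) := by
        simp only [ENNReal.tsum_prod', ENNReal.tsum_mul_left, ENNReal.tsum_mul_right, eulerSum]

lemma eulerSum_eq_subtype_mul_subtype_not (p : ι → Prop) (w : ι → ℝ≥0∞) :
    eulerSum w =
      eulerSum (fun i : {i // p i} => w i) * eulerSum (fun i : {i // ¬ p i} => w i) := by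
  classical
  rw [← eulerSum_comp_equiv (Equiv.sumCompl p) w, eulerSum_sum]
  rfl

lemma eulerSum_mul_self_le {g₁ g₂ : ι → κ} (h₁ : Function.Injective g₁)
    (h₂ : Function.Injective g₂) (hne : ∀ i j, g₁ i ≠ g₂ j) {v : ι → ℝ≥0∞} {w : κ → ℝ≥0∞}
    (hw₁ : ∀ i, w (g₁ i) = v i) (hw₂ : ∀ i, w (g₂ i) = v i) :
    eulerSum v * eulerSum v ≤ eulerSum w := by
  have hsum : eulerSum (w ∘ Sum.elim g₁ g₂) = eulerSum v * eulerSum v := by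
    rw [eulerSum_sum]
    simp only [Function.comp_def, Sum.elim_inl, Sum.elim_inr, hw₁, hw₂]
  exact hsum ▸ eulerSum_comp_le (h₁.sumElim h₂ hne) w

lemma tsum_prod_fin_eq_tsum_pow (w : ι → ℝ≥0∞) (k : ℕ) :
    ∑' v : Fin k → ι, ∏ i, w (v i) = (∑' i, w i) ^ k := by
  induction k with
  | zero => simp
  | succ k ih =>
    rw [← (Fin.consEquiv fun _ => ι).tsum_eq, ENNReal.tsum_prod', pow_succ', ← ih]
    simp [Fin.prod_univ_succ, Fin.consEquiv, ENNReal.tsum_mul_left, ENNReal.tsum_mul_right]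

lemma eulerSum_le_inv_one_sub_tsum (w : ι → ℝ≥0∞) : eulerSum w ≤ (1 - ∑' i, w i)⁻¹ :=
  calc eulerSum w
      = ∑' m : Multiset ι, (m.toList.map w).prod := by
        refine tsum_congr fun m => ?_
        conv_lhs => rw [← m.coe_toList, Multiset.map_coe, Multiset.prod_coe]
    _ ≤ ∑' l : List ι, (l.map w).prod :=
        ENNReal.tsum_comp_le_tsum_of_injective
          (Function.LeftInverse.injective (g := fun l : List ι => (l : Multiset ι))
            Multiset.coe_toList) fun l => (l.map w).prod
    _ = ∑' v : Σ n, Fin n → ι, ∏ i, w (v.2 i) := by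
        rw [← List.equivSigmaTuple.symm.tsum_eq]
        simp [List.equivSigmaTuple, List.prod_ofFn]
    _ = (1 - ∑' i, w i)⁻¹ := by
        rw [ENNReal.tsum_sigma', ← ENNReal.tsum_geometric]
        exact tsum_congr fun n => tsum_prod_fin_eq_tsum_pow w n

lemma eulerSum_ne_top_of_tsum_lt_one {w : ι → ℝ≥0∞} (h : ∑' i, w i < 1) : eulerSum w ≠ ⊤ :=
  ne_top_of_le_ne_top (ENNReal.inv_ne_top.2 (tsub_pos_of_lt h).ne') (eulerSum_le_inv_one_sub_tsum w)

lemma eulerSum_ne_top_of_finite [Finite ι] {w : ι → ℝ≥0∞} (hw : ∀ i, w i < 1) :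
    eulerSum w ≠ ⊤ := by
  induction ι using Finite.induction_empty_option with
  | of_equiv e ih =>
    rw [← eulerSum_comp_equiv e]
    exact ih fun i => hw (e i)
  | h_empty => exact eulerSum_ne_top_of_tsum_lt_one (by simp)
  | h_option ih =>
    rw [← eulerSum_comp_equiv (Equiv.optionEquivSumPUnit.{0} _).symm, eulerSum_sum]
    refine ENNReal.mul_ne_top (ih fun _ => hw _) (eulerSum_ne_top_of_tsum_lt_one ?_)
    simpa [tsum_fintype] using hw none

lemma eulerSum_ne_top {w : ι → ℝ≥0∞} (hw : ∀ i, w i < 1) (hsum : ∑' i, w i ≠ ⊤) :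
    eulerSum w ≠ ⊤ := by
  obtain ⟨F, hF⟩ :=
    ((ENNReal.tendsto_tsum_compl_atTop_zero hsum).eventually (gt_mem_nhds zero_lt_one)).exists
  rw [eulerSum_eq_subtype_mul_subtype_not (· ∈ F)]
  exact ENNReal.mul_ne_top (eulerSum_ne_top_of_finite fun i => hw i)
    (eulerSum_ne_top_of_tsum_lt_one hF)

end EulerSum

section PrimeSums

open scoped ENNReal NNReal
open Filter Topology

variable (L : Type*) [Field L] [NumberField L]

/-- The weight `N(P)⁻ˢ` of a prime `P` of `L`; the Euler product of these weights is the Dedekind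
zeta function. -/
noncomputable def primeWeight (s : ℝ) (P : HeightOneSpectrum (𝓞 L)) : ℝ≥0∞ :=
  (Ideal.absNorm P.asIdeal : ℝ≥0∞) ^ (-s)

/-- The Dedekind zeta function at a real number `s`, as an Euler product in `ℝ≥0∞`, hence equal
to `⊤` where the product diverges. -/
noncomputable def eulerZeta (s : ℝ) : ℝ≥0∞ :=
  eulerSum (primeWeight L s)

variable {L}

section Dedekind

variable {R : Type*} [CommRing R] [IsDedekindDomain R]

lemma prod_map_asIdeal_ne_bot (m : Multiset (HeightOneSpectrum R)) :
    (m.map HeightOneSpectrum.asIdeal).prod ≠ ⊥ := fun h =>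
  have ⟨P, _, hP⟩ := Multiset.mem_map.1 (Multiset.prod_eq_zero_iff.1 h)
  P.ne_bot hP

lemma prod_map_asIdeal_injective : Function.Injective
    fun m : Multiset (HeightOneSpectrum R) => (m.map HeightOneSpectrum.asIdeal).prod := by
  classical
  have hfactors (m : Multiset (HeightOneSpectrum R)) :
      UniqueFactorizationMonoid.normalizedFactors (m.map HeightOneSpectrum.asIdeal).prod =
        m.map HeightOneSpectrum.asIdeal :=
    UniqueFactorizationMonoid.normalizedFactors_prod_of_prime fun p hp => by
      obtain ⟨P, _, rfl⟩ := Multiset.mem_map.1 hp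
      exact P.prime
  intro m m' h
  have hmap := congrArg UniqueFactorizationMonoid.normalizedFactors h
  rw [hfactors, hfactors] at hmap
  exact Multiset.map_injective (fun P Q => HeightOneSpectrum.ext) hmap

lemma exists_prod_map_asIdeal_eq {I : Ideal R} (hI : I ≠ ⊥) :
    ∃ m : Multiset (HeightOneSpectrum R), (m.map HeightOneSpectrum.asIdeal).prod = I := by
  induction I using UniqueFactorizationMonoid.induction_on_prime with
  | h₁ => exact absurd rfl hI
  | h₂ I hunit => exact ⟨0, by simpa using (Ideal.isUnit_iff.1 hunit).symm⟩
  | h₃ I p hI' hp ih =>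
    obtain ⟨m, rfl⟩ := ih hI'
    exact ⟨⟨p, Ideal.isPrime_of_prime hp, hp.ne_zero⟩ ::ₘ m, by simp⟩

lemma absNorm_under_prime [Algebra.IsIntegral ℤ R] (P : HeightOneSpectrum R) :
    (Ideal.absNorm (P.asIdeal.under ℤ)).Prime :=
  have : NeZero P.asIdeal := ⟨P.ne_bot⟩
  Nat.absNorm_under_prime P.asIdeal

end Dedekind

variable (L) in
/-- The norm of the product ideal of a multiset of primes, the index by which the terms of the Euler
product are grouped into a Dirichlet series. -/
noncomputable def multisetNorm (m : Multiset (HeightOneSpectrum (𝓞 L))) : ℕ :=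
  Ideal.absNorm (m.map HeightOneSpectrum.asIdeal).prod

lemma multisetNorm_ne_zero (m : Multiset (HeightOneSpectrum (𝓞 L))) : multisetNorm L m ≠ 0 :=
  fun h => prod_map_asIdeal_ne_bot m (Ideal.absNorm_eq_zero_iff.1 h)

lemma prod_map_primeWeight (s : ℝ) (m : Multiset (HeightOneSpectrum (𝓞 L))) :
    (m.map (primeWeight L s)).prod = (multisetNorm L m : ℝ≥0∞) ^ (-s) := by
  unfold multisetNorm
  induction m using Multiset.induction with
  | empty => simp
  | cons P m ih =>
    rw [Multiset.map_cons, Multiset.prod_cons, ih, Multiset.map_cons, Multiset.prod_cons, map_mul,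
      Nat.cast_mul, ENNReal.mul_rpow_of_ne_top (ENNReal.natCast_ne_top _)
        (ENNReal.natCast_ne_top _), primeWeight]

lemma enatCard_multisetNorm_fiber {n : ℕ} (hn : n ≠ 0) :
    ENat.card (multisetNorm L ⁻¹' {n}) = Nat.card {I : Ideal (𝓞 L) // Ideal.absNorm I = n} := by
  let e : multisetNorm L ⁻¹' {n} → {I : Ideal (𝓞 L) // Ideal.absNorm I = n} := fun m => ⟨_, m.2⟩
  have he : Function.Bijective e := by
    refine ⟨fun m m' h => Subtype.ext (prod_map_asIdeal_injective (congrArg Subtype.val h)), ?_⟩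
    rintro ⟨I, hI⟩
    obtain ⟨m, rfl⟩ := exists_prod_map_asIdeal_eq (I := I) fun h => hn (by simpa [h] using hI.symm)
    exact ⟨⟨m, hI⟩, rfl⟩
  have : Finite {I : Ideal (𝓞 L) // Ideal.absNorm I = n} := Ideal.finite_setOfPred_absNorm_eq n
  rw [ENat.card_congr (Equiv.ofBijective e he), ENat.card_eq_coe_natCard]

lemma tsum_multisetNorm_fiber (s : ℝ) {n : ℕ} (hn : n ≠ 0) :
    ∑' m : multisetNorm L ⁻¹' {n}, (m.1.map (primeWeight L s)).prod =
      (Nat.card {I : Ideal (𝓞 L) // Ideal.absNorm I = n} : ℝ≥0∞) * (n : ℝ≥0∞) ^ (-s) := by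
  rw [← ENat.toENNReal_coe, ← enatCard_multisetNorm_fiber hn, ← ENNReal.tsum_const]
  exact tsum_congr fun m => by rw [prod_map_primeWeight, show multisetNorm L m.1 = n from m.2]

variable (L) in
lemma isEmpty_multisetNorm_fiber_zero : IsEmpty (multisetNorm L ⁻¹' {0}) :=
  ⟨fun m => multisetNorm_ne_zero m.1 m.2⟩

lemma tsum_multisetNorm_fiber_ne_top (s : ℝ) (n : ℕ) :
    ∑' m : multisetNorm L ⁻¹' {n}, (m.1.map (primeWeight L s)).prod ≠ ⊤ := by
  rcases eq_or_ne n 0 with rfl | hn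
  · have := isEmpty_multisetNorm_fiber_zero L
    simp
  · rw [tsum_multisetNorm_fiber s hn]
    exact ENNReal.mul_ne_top (ENNReal.natCast_ne_top _)
      (ENNReal.rpow_ne_top_of_ne_zero (Nat.cast_ne_zero.2 hn) (ENNReal.natCast_ne_top _))

lemma term_dedekindZeta_eq_tsum_multisetNorm_fiber (s : ℝ) (n : ℕ) :
    LSeries.term (fun n => (Nat.card {I : Ideal (𝓞 L) // Ideal.absNorm I = n} : ℂ)) s n =
      ((∑' m : multisetNorm L ⁻¹' {n}, (m.1.map (primeWeight L s)).prod).toReal : ℂ) := by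
  rcases eq_or_ne n 0 with rfl | hn
  · have := isEmpty_multisetNorm_fiber_zero L
    simp
  · rw [tsum_multisetNorm_fiber s hn, LSeries.term_of_ne_zero hn, ENNReal.toReal_mul,
      ENNReal.toReal_natCast, ← ENNReal.toReal_rpow, ENNReal.toReal_natCast, Complex.ofReal_mul,
      Complex.ofReal_cpow n.cast_nonneg, Complex.ofReal_neg, Complex.cpow_neg, div_eq_mul_inv,
      Complex.ofReal_natCast, Complex.ofReal_natCast]

lemma dedekindZeta_eq_toReal_eulerZeta (s : ℝ) :
    dedekindZeta L s = ((eulerZeta L s).toReal : ℂ) := by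
  rw [dedekindZeta, LSeries, tsum_congr (term_dedekindZeta_eq_tsum_multisetNorm_fiber s),
    ← Complex.ofReal_tsum, ← ENNReal.tsum_toReal_eq (tsum_multisetNorm_fiber_ne_top s)]
  exact congrArg (fun z : ℝ≥0∞ => (z.toReal : ℂ)) <|
    ENNReal.tsum_fiberwise (fun m => (m.map (primeWeight L s)).prod) (multisetNorm L)

lemma tendsto_sub_one_mul_toReal_eulerZeta : Tendsto (fun s => (s - 1) * (eulerZeta L s).toReal)
    (𝓝[>] 1) (𝓝 (dedekindZeta_residue L)) := by
  refine ((Complex.continuous_re.tendsto _).comp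
    (tendsto_sub_one_mul_dedekindZeta_nhdsGT L)).congr fun s => ?_
  simp only [Function.comp_apply, dedekindZeta_eq_toReal_eulerZeta]
  norm_cast

lemma eventually_eulerZeta_ne_top : ∀ᶠ s in 𝓝[>] (1 : ℝ), eulerZeta L s ≠ ⊤ := by
  filter_upwards [tendsto_sub_one_mul_toReal_eulerZeta.eventually
    (lt_mem_nhds (dedekindZeta_residue_pos L))] with s hs htop
  simp [htop] at hs

lemma tsum_comp_ne_top_of_card_fiber_le {ι κ : Type*} {g : ι → κ} {k : ℕ}
    (hg : ∀ n, ENat.card (g ⁻¹' {n}) ≤ k) {w : κ → ℝ≥0∞} (hw : ∑' n, w n ≠ ⊤) :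
    ∑' i, w (g i) ≠ ⊤ := by
  have hfiber (n : κ) : ∑' i : g ⁻¹' {n}, w (g i) ≤ k * w n :=
    calc ∑' i : g ⁻¹' {n}, w (g i) = ENat.card (g ⁻¹' {n}) * w n := by
          rw [← ENNReal.tsum_const]
          exact tsum_congr fun i => congrArg w i.2
      _ ≤ k * w n := by
          gcongr
          simpa using ENat.toENNReal_le.2 (hg n)
  have hle : ∑' i, w (g i) ≤ k * ∑' n, w n := by
    rw [← ENNReal.tsum_fiberwise _ g, ← ENNReal.tsum_mul_left]
    exact ENNReal.tsum_le_tsum hfiber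
  exact ne_top_of_le_ne_top (ENNReal.mul_ne_top (ENNReal.natCast_ne_top k) hw) hle

lemma card_primesOver_le_finrank {R : Type*} (R' : Type*) [CommRing R] [IsDomain R] [CommRing R']
    [Algebra R R'] [Module.Finite R R'] [Module.Flat R R'] (p : Ideal R) [p.IsPrime] :
    ENat.card (p.primesOver R') ≤ Module.finrank R R' := by
  have : Finite (p.primesOver R') := Algebra.QuasiFinite.finite_primesOver p
  have := Fintype.ofFinite (p.primesOver R')
  rw [ENat.card_eq_coe_fintype_card, Nat.cast_le, ← Ideal.sum_ramification_inertia_eq_finrank p,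
    Fintype.card_eq_sum_ones]
  refine Finset.sum_le_sum fun q _ => ?_
  have := q.2.1
  exact Nat.mul_pos (Ideal.ramificationIdx_pos q.1 R) (Ideal.inertiaDeg_pos q.1 R)

lemma one_lt_absNorm (P : HeightOneSpectrum (𝓞 L)) : 1 < Ideal.absNorm P.asIdeal :=
  (Nat.two_le_iff _).2 ⟨mt Ideal.absNorm_eq_zero_iff.1 P.ne_bot,
    mt Ideal.absNorm_eq_one_iff.1 P.isPrime.ne_top⟩

lemma card_absNorm_under_fiber_le (n : ℕ) :
    ENat.card ((fun P : HeightOneSpectrum (𝓞 L) => Ideal.absNorm (P.asIdeal.under ℤ)) ⁻¹' {n}) ≤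
      Module.finrank ℤ (𝓞 L) := by
  by_cases hn : n.Prime
  · have : (Ideal.span {(n : ℤ)}).IsPrime :=
      (Ideal.span_singleton_prime (Nat.cast_ne_zero.2 hn.ne_zero)).2 (Nat.prime_iff_prime_int.1 hn)
    refine le_trans ?_ (card_primesOver_le_finrank (𝓞 L) (Ideal.span {(n : ℤ)}))
    refine ENat.card_le_card_of_injective (f := fun P => ⟨P.1.asIdeal, P.1.isPrime, ?_⟩) ?_
    · have := Int.liesOver_span_absNorm P.1.asIdeal
      rwa [show Ideal.absNorm (P.1.asIdeal.under ℤ) = n from P.2] at this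
    · exact fun P Q h => Subtype.ext (HeightOneSpectrum.ext (congrArg Subtype.val h))
  · have : IsEmpty ((fun P : HeightOneSpectrum (𝓞 L) =>
        Ideal.absNorm (P.asIdeal.under ℤ)) ⁻¹' {n}) :=
      ⟨fun P => hn ((show _ = n from P.2) ▸ absNorm_under_prime P.1)⟩
    rw [ENat.card_eq_zero_iff_empty _ |>.2 this]
    exact zero_le

lemma sq_absNorm_under_le_absNorm {P : HeightOneSpectrum (𝓞 L)}
    (hP : ¬ (Ideal.absNorm P.asIdeal).Prime) :
    Ideal.absNorm (P.asIdeal.under ℤ) ^ 2 ≤ Ideal.absNorm P.asIdeal := by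
  have hp := absNorm_under_prime P
  have hpow : Ideal.absNorm (P.asIdeal.under ℤ) ^ P.asIdeal.inertiaDeg ℤ =
      Ideal.absNorm P.asIdeal := by
    have := Int.liesOver_span_absNorm P.asIdeal
    simpa only [Int.ideal_span_absNorm_eq_self] using Ideal.absNorm_pow_inertiaDeg
      (Ideal.span {(Ideal.absNorm (P.asIdeal.under ℤ) : ℤ)}) P.asIdeal
  rw [← hpow] at hP ⊢
  have hdeg_pos : 0 < P.asIdeal.inertiaDeg ℤ := Ideal.inertiaDeg_pos P.asIdeal ℤ
  have hdeg_ne_one : P.asIdeal.inertiaDeg ℤ ≠ 1 := fun h => hP (by rwa [h, pow_one])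
  exact Nat.pow_le_pow_right hp.pos (by omega)

variable (L) in
lemma tsum_primeWeight_not_prime_ne_top :
    ∑' P : {P : HeightOneSpectrum (𝓞 L) | ¬ (Ideal.absNorm P.asIdeal).Prime},
      primeWeight L 1 P ≠ ⊤ := by
  have hle (P : {P : HeightOneSpectrum (𝓞 L) | ¬ (Ideal.absNorm P.asIdeal).Prime}) :
      primeWeight L 1 P ≤ (((Ideal.absNorm (P.1.asIdeal.under ℤ) : ℝ≥0) ^ 2)⁻¹ : ℝ≥0) := by
    have hne : (Ideal.absNorm (P.1.asIdeal.under ℤ) : ℝ≥0) ≠ 0 :=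
      Nat.cast_ne_zero.2 (absNorm_under_prime P.1).ne_zero
    rw [primeWeight, ENNReal.rpow_neg_one, ENNReal.coe_inv (pow_ne_zero 2 hne), ENNReal.inv_le_inv]
    exact_mod_cast sq_absNorm_under_le_absNorm P.2
  -- The inverse is taken in `ℝ≥0`, where `0⁻¹ = 0` keeps the term `n = 0` finite.
  have hsum : ∑' n : ℕ, ((((n : ℝ≥0) ^ 2)⁻¹ : ℝ≥0) : ℝ≥0∞) ≠ ⊤ := by
    rw [ENNReal.tsum_coe_ne_top_iff_summable_coe]
    simp
  refine ne_top_of_le_ne_top (tsum_comp_ne_top_of_card_fiber_le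
    (card_absNorm_under_fiber_le (L := L)) hsum) ((ENNReal.tsum_le_tsum hle).trans ?_)
  exact ENNReal.tsum_comp_le_tsum_of_injective Subtype.val_injective
    fun P : HeightOneSpectrum (𝓞 L) =>
      ((((Ideal.absNorm (P.asIdeal.under ℤ) : ℝ≥0) ^ 2)⁻¹ : ℝ≥0) : ℝ≥0∞)

/-- The prime `P` of `L` has (at least) two distinct primes of residue degree one above it in `M`;
the degree condition is expressed by equality of the norms. For a quadratic extension this says
that `P` splits. -/
def HasTwoDegreeOnePrimesAbove (M : Type*) [Field M] [NumberField M]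
    [Algebra L M] (P : HeightOneSpectrum (𝓞 L)) : Prop :=
  ∃ Q₁ Q₂ : HeightOneSpectrum (𝓞 M), Q₁ ≠ Q₂ ∧
    Q₁.asIdeal.under (𝓞 L) = P.asIdeal ∧ Ideal.absNorm Q₁.asIdeal = Ideal.absNorm P.asIdeal ∧
    Q₂.asIdeal.under (𝓞 L) = P.asIdeal ∧ Ideal.absNorm Q₂.asIdeal = Ideal.absNorm P.asIdeal

lemma primeWeight_ne_top (s : ℝ) (P : HeightOneSpectrum (𝓞 L)) : primeWeight L s P ≠ ⊤ :=
  ENNReal.rpow_ne_top_of_ne_zero (Nat.cast_ne_zero.2 (one_lt_absNorm P).ne_bot)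
    (ENNReal.natCast_ne_top _)

lemma primeWeight_one_lt_one (P : HeightOneSpectrum (𝓞 L)) : primeWeight L 1 P < 1 := by
  rw [primeWeight, ENNReal.rpow_neg_one, ENNReal.inv_lt_one]
  exact_mod_cast one_lt_absNorm P

lemma primeWeight_le_primeWeight {s t : ℝ} (hst : s ≤ t) (P : HeightOneSpectrum (𝓞 L)) :
    primeWeight L t P ≤ primeWeight L s P :=
  ENNReal.rpow_le_rpow_of_exponent_le (by exact_mod_cast (one_lt_absNorm P).le) (neg_le_neg hst)

lemma tsum_primeWeight_ne_top_of_finite {E : Set (HeightOneSpectrum (𝓞 L))} (hE : E.Finite)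
    (s : ℝ) : ∑' P : E, primeWeight L s P ≠ ⊤ := by
  have := hE.fintype
  rw [tsum_fintype]
  exact ENNReal.sum_ne_top.2 fun P _ => primeWeight_ne_top s P.1

variable {M : Type*} [Field M] [NumberField M] [Algebra L M]

lemma eulerSum_mul_self_le_eulerZeta {E : Set (HeightOneSpectrum (𝓞 L))}
    (h : ∀ P ∉ E, HasTwoDegreeOnePrimesAbove M P) (s : ℝ) :
    eulerSum (fun P : {P // P ∉ E} => primeWeight L s P) *
      eulerSum (fun P : {P // P ∉ E} => primeWeight L s P) ≤ eulerZeta M s := by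
  choose Q₁ Q₂ hne hunder₁ hnorm₁ hunder₂ hnorm₂ using fun P : {P // P ∉ E} => h P.1 P.2
  have eq_of_under_eq {P P' : {P // P ∉ E}} (hPP' : P.1.asIdeal = P'.1.asIdeal) : P = P' :=
    Subtype.ext (HeightOneSpectrum.ext hPP')
  refine eulerSum_mul_self_le (g₁ := Q₁) (g₂ := Q₂) ?_ ?_ ?_
    (fun P => by simp only [primeWeight, hnorm₁]) (fun P => by simp only [primeWeight, hnorm₂])
  · exact fun P P' hQ => eq_of_under_eq (by rw [← hunder₁, ← hunder₁, hQ])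
  · exact fun P P' hQ => eq_of_under_eq (by rw [← hunder₂, ← hunder₂, hQ])
  · intro P P' hQ
    obtain rfl := eq_of_under_eq ((hunder₁ P).symm.trans (hQ ▸ hunder₂ P'))
    exact hne P hQ

lemma exists_forall_eulerZeta_sq_le {E : Set (HeightOneSpectrum (𝓞 L))}
    (hE : ∑' P : E, primeWeight L 1 P ≠ ⊤) (h : ∀ P ∉ E, HasTwoDegreeOnePrimesAbove M P) :
    ∃ C : ℝ≥0∞, C ≠ ⊤ ∧ ∀ s : ℝ, 1 ≤ s → eulerZeta L s ^ 2 ≤ C * eulerZeta M s := by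
  set C := eulerSum fun P : E => primeWeight L 1 P
  have hC : C ≠ ⊤ := eulerSum_ne_top (fun P => primeWeight_one_lt_one P.1) hE
  refine ⟨C ^ 2, ENNReal.pow_ne_top hC, fun s hs => ?_⟩
  rw [eulerZeta, eulerSum_eq_subtype_mul_subtype_not (· ∈ E), mul_pow]
  refine mul_le_mul' (pow_le_pow_left' ?_ 2) ?_
  · exact eulerSum_mono fun P => primeWeight_le_primeWeight hs P.1
  · rw [sq]
    exact eulerSum_mul_self_le_eulerZeta h s

variable (M) in
lemma exists_notMem_not_hasTwoDegreeOnePrimesAbove {E : Set (HeightOneSpectrum (𝓞 L))}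
    (hE : ∑' P : E, primeWeight L 1 P ≠ ⊤) : ∃ P ∉ E, ¬ HasTwoDegreeOnePrimesAbove M P := by
  -- Otherwise `ζ_L(s)² ≤ C ζ_M(s)`, comparing a double pole at `s = 1` with a simple one.
  by_contra! h
  obtain ⟨C, hC, hle⟩ := exists_forall_eulerZeta_sq_le hE h
  have hleft : Tendsto (fun s => ((s - 1) * (eulerZeta L s).toReal) ^ 2) (𝓝[>] 1)
      (𝓝 (dedekindZeta_residue L ^ 2)) := tendsto_sub_one_mul_toReal_eulerZeta.pow 2
  have hzero : Tendsto (fun s : ℝ => s - 1) (𝓝[>] 1) (𝓝 0) :=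
    ((continuous_sub_right (1 : ℝ)).tendsto' 1 0 (sub_self 1)).mono_left nhdsWithin_le_nhds
  have hright : Tendsto (fun s => C.toReal * ((s - 1) * ((s - 1) * (eulerZeta M s).toReal)))
      (𝓝[>] 1) (𝓝 0) := by
    simpa using (hzero.mul tendsto_sub_one_mul_toReal_eulerZeta).const_mul C.toReal
  have hres : dedekindZeta_residue L ^ 2 ≤ 0 := by
    refine le_of_tendsto_of_tendsto hleft hright ?_
    filter_upwards [eventually_eulerZeta_ne_top (L := M), self_mem_nhdsWithin] with s hM hs
    have hreal := ENNReal.toReal_mono (ENNReal.mul_ne_top hC hM) (hle s (le_of_lt hs))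
    rw [ENNReal.toReal_pow, ENNReal.toReal_mul] at hreal
    calc ((s - 1) * (eulerZeta L s).toReal) ^ 2
        = (s - 1) ^ 2 * (eulerZeta L s).toReal ^ 2 := mul_pow _ _ 2
      _ ≤ (s - 1) ^ 2 * (C.toReal * (eulerZeta M s).toReal) := by gcongr
      _ = C.toReal * ((s - 1) * ((s - 1) * (eulerZeta M s).toReal)) := by ring
  exact (pow_pos (dedekindZeta_residue_pos L) 2).not_ge hres

end PrimeSums

section QuadraticExtension

lemma inertiaDeg_eq_one_of_finrank_eq_two {R S : Type*} [CommRing R] [IsDomain R] [CommRing S]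
    [Algebra R S] [Module.Finite R S] [Module.Flat R S] (hfinrank : Module.finrank R S = 2)
    (P : Ideal R) [P.IsPrime] (Q Q' : Ideal S) [Q.IsPrime] [Q'.IsPrime] [Q.LiesOver P]
    [Q'.LiesOver P] (hne : Q ≠ Q') : Q.inertiaDeg R = 1 := by
  classical
  have : Finite (P.primesOver S) := Algebra.QuasiFinite.finite_primesOver P
  let _ := Fintype.ofFinite (P.primesOver S)
  let q : P.primesOver S := ⟨Q, ‹_›, ‹_›⟩
  let q' : P.primesOver S := ⟨Q', ‹_›, ‹_›⟩
  have hsum : Q.ramificationIdx R * Q.inertiaDeg R + Q'.ramificationIdx R * Q'.inertiaDeg R ≤ 2 :=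
    calc
      _ = ∑ x ∈ ({q, q'} : Finset (P.primesOver S)),
            x.1.ramificationIdx R * x.1.inertiaDeg R :=
        (Finset.sum_pair fun h : q = q' => hne (congrArg Subtype.val h)).symm
      _ ≤ ∑ x : P.primesOver S, x.1.ramificationIdx R * x.1.inertiaDeg R :=
        Finset.sum_le_sum_of_subset (Finset.subset_univ _)
      _ = 2 := by rw [Ideal.sum_ramification_inertia_eq_finrank, hfinrank]
  have he := Ideal.ramificationIdx_pos Q R
  have hf := Ideal.inertiaDeg_pos Q R
  have hef' := Nat.mul_pos (Ideal.ramificationIdx_pos Q' R) (Ideal.inertiaDeg_pos Q' R)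
  nlinarith

lemma comap_ne_of_sq_sub_mem {R S : Type*} [CommRing R] [CommRing S] [Algebra R S]
    (τ : S ≃ₐ[R] S) {α x : R} {β : S} (hβ : β ^ 2 = algebraMap R S α) (hτ : τ β = -β)
    {Q : Ideal S} [Q.IsPrime] (hx : x ^ 2 - α ∈ Q.under R) (h2α : 2 * α ∉ Q.under R) :
    Q.comap τ ≠ Q := by
  intro hQ
  have hτQ : ∀ z ∈ Q, τ z ∈ Q := fun z hz => by
    rw [← hQ] at hz
    exact hz
  set y := algebraMap R S x with hy
  have hmul : (y - β) * (y + β) ∈ Q := by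
    have h : algebraMap R S (x ^ 2 - α) ∈ Q := hx
    rw [map_sub, map_pow, ← hβ, ← hy] at h
    convert h using 1
    ring
  have h2β : 2 * β ∈ Q := by
    rcases Ideal.IsPrime.mem_or_mem ‹_› hmul with h | h
    · convert Q.sub_mem (hτQ _ h) h using 1
      rw [map_sub, hτ, hy, τ.commutes]
      ring
    · convert Q.sub_mem h (hτQ _ h) using 1
      rw [map_add, hτ, hy, τ.commutes]
      ring
  apply h2α
  change algebraMap R S (2 * α) ∈ Q
  convert Q.mul_mem_left β h2β using 1
  rw [map_mul, map_ofNat, ← hβ]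
  ring

lemma exists_quadratic_extension.{u} {L : Type u} [Field L] {α : L} (hα : ¬ IsSquare α) :
    ∃ (M : Type u) (_ : Field M) (_ : Algebra L M) (σ : M ≃ₐ[L] M) (β : M),
      Module.finrank L M = 2 ∧ β ^ 2 = algebraMap L M α ∧ σ β = -β := by
  have hirr : Irreducible (X ^ 2 - C α) :=
    X_pow_sub_C_irreducible_of_prime Nat.prime_two fun b hb => hα ⟨b, by rw [← hb, sq]⟩
  have : Fact (Irreducible (X ^ 2 - C α)) := ⟨hirr⟩
  let pb := AdjoinRoot.powerBasis hirr.ne_zero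
  have : Module.Finite L (AdjoinRoot (X ^ 2 - C α)) := pb.finite
  let β : AdjoinRoot (X ^ 2 - C α) := AdjoinRoot.root _
  have hβ : β ^ 2 = algebraMap L _ α := by
    have h := AdjoinRoot.eval₂_root (X ^ 2 - C α)
    rwa [eval₂_sub, eval₂_X_pow, eval₂_C, sub_eq_zero] at h
  have hneg : eval₂ (Algebra.ofId L (AdjoinRoot (X ^ 2 - C α)) : L →+* _) (-β)
      (X ^ 2 - C α) = 0 := by
    rw [eval₂_sub, eval₂_X_pow, eval₂_C, neg_sq, hβ]
    exact sub_self _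
  let σ := AdjoinRoot.liftAlgHom _ (Algebra.ofId L _) (-β) hneg
  have hσ : σ β = -β := AdjoinRoot.lift_root hneg
  refine ⟨_, _, _, AlgEquiv.ofBijective σ (Algebra.IsAlgebraic.algHom_bijective σ), β, ?_, hβ, hσ⟩
  rw [pb.finrank, AdjoinRoot.powerBasis_dim, natDegree_X_pow_sub_C]

variable {L M : Type*} [Field L] [NumberField L] [Field M] [NumberField M] [Algebra L M]

lemma hasTwoDegreeOnePrimesAbove_of_sq_sub_mem (hfinrank : Module.finrank L M = 2)
    (σ : M ≃ₐ[L] M) {α : 𝓞 L} {β : 𝓞 M} (hβ : β ^ 2 = algebraMap (𝓞 L) (𝓞 M) α)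
    (hσ : σ (β : M) = -(β : M)) {P : HeightOneSpectrum (𝓞 L)} {x : 𝓞 L}
    (hx : x ^ 2 - α ∈ P.asIdeal) (h2α : 2 * α ∉ P.asIdeal) :
    HasTwoDegreeOnePrimesAbove M P := by
  have := P.isPrime
  obtain ⟨Q, hQprime, hQ⟩ : ∃ Q : Ideal (𝓞 M), Q.IsPrime ∧ Q.under (𝓞 L) = P.asIdeal :=
    Ideal.exists_ideal_over_prime_of_isIntegral_of_isDomain P.asIdeal <| by
      rw [(RingHom.injective_iff_ker_eq_bot _).1 (FaithfulSMul.algebraMap_injective (𝓞 L) (𝓞 M))]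
      exact bot_le
  have : Q.LiesOver P.asIdeal := ⟨hQ.symm⟩
  let τ : 𝓞 M ≃ₐ[𝓞 L] 𝓞 M := RingOfIntegers.mapAlgEquiv σ
  have hne : Q.comap τ ≠ Q :=
    comap_ne_of_sq_sub_mem τ hβ (RingOfIntegers.ext hσ) (hQ ▸ hx) (hQ ▸ h2α)
  have : (Q.comap τ).IsPrime := Ideal.comap_isPrime τ Q
  have : (Q.comap τ).LiesOver P.asIdeal := Ideal.comap_liesOver (p := P.asIdeal) (Q := Q) τ
  have hfinrank' : Module.finrank (𝓞 L) (𝓞 M) = 2 := by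
    rw [← IsFractionRing.finrank_eq (𝓞 L) L (𝓞 M) M, hfinrank]
  have hnorm : Ideal.absNorm Q = Ideal.absNorm P.asIdeal := by
    rw [← Ideal.absNorm_pow_inertiaDeg P.asIdeal Q,
      inertiaDeg_eq_one_of_finrank_eq_two hfinrank' P.asIdeal Q _ hne.symm, pow_one]
  have hnorm' : Ideal.absNorm (Q.comap τ) = Ideal.absNorm P.asIdeal := by
    rw [← Ideal.absNorm_pow_inertiaDeg P.asIdeal (Q.comap τ),
      inertiaDeg_eq_one_of_finrank_eq_two hfinrank' P.asIdeal _ Q hne, pow_one]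
  exact ⟨⟨Q, hQprime, Ideal.ne_bot_of_liesOver_of_ne_bot P.ne_bot Q⟩,
    ⟨Q.comap τ, ‹_›, Ideal.ne_bot_of_liesOver_of_ne_bot P.ne_bot _⟩,
    fun h => hne (congrArg HeightOneSpectrum.asIdeal h).symm, hQ, hnorm,
    (Ideal.LiesOver.over (P := Q.comap τ) (p := P.asIdeal)).symm, hnorm'⟩

end QuadraticExtension

section NonsquareModPrime

section DedekindDomain

variable {R : Type*} [CommRing R] [IsDedekindDomain R]

lemma finite_setOf_mem_asIdeal {d : R} (hd : d ≠ 0) :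
    {P : HeightOneSpectrum R | d ∈ P.asIdeal}.Finite := by
  simp only [← Ideal.dvd_span_singleton]
  exact Ideal.finite_factors (by rwa [Ne, Submodule.zero_eq_bot, Ideal.span_singleton_eq_bot])

lemma exists_sq_sub_mem_of_valuation_lt_one {F : Type*} [Field F] [Algebra R F]
    [IsFractionRing R F] {P : HeightOneSpectrum R} {α : R} {x : F}
    (hx : P.valuation F (x ^ 2 - algebraMap R F α) < 1) : ∃ y : R, y ^ 2 - α ∈ P.asIdeal := by
  have hx1 : P.valuation F x ≤ 1 := by
    rw [← pow_le_one_iff two_ne_zero, ← map_pow, ← sub_add_cancel (x ^ 2) (algebraMap R F α)]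
    exact Valuation.map_add_le _ hx.le (P.valuation_le_one α)
  obtain ⟨y, hy⟩ := P.exists_valuation_sub_lt_of_integer hx1 1
  suffices h : P.valuation F (algebraMap R F (y ^ 2 - α)) < 1 from
    ⟨y, (P.valuation_lt_one_iff_mem _).1 h⟩
  have hyx : P.valuation F (algebraMap R F y + x) ≤ 1 :=
    Valuation.map_add_le _ (P.valuation_le_one y) hx1
  have key : algebraMap R F (y ^ 2 - α) =
      (algebraMap R F y - x) * (algebraMap R F y + x) + (x ^ 2 - algebraMap R F α) := by
    rw [map_sub, map_pow]
    ring
  rw [key]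
  refine Valuation.map_add_lt _ ?_ hx
  rw [map_mul]
  exact mul_lt_one_of_lt_of_le hy hyx

end DedekindDomain

variable {L : Type*} [Field L] [NumberField L]

lemma infinite_setOf_forall_sq_sub_notMem {α : 𝓞 L} (hα : ¬ IsSquare (α : L)) :
    {P : HeightOneSpectrum (𝓞 L) | (Ideal.absNorm P.asIdeal).Prime ∧
      ∀ x : 𝓞 L, x ^ 2 - α ∉ P.asIdeal}.Infinite := by
  intro hfin
  have h2α : 2 * α ≠ 0 := by
    rintro h
    rcases mul_eq_zero.1 h with h | rfl
    · exact two_ne_zero h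
    · exact hα (by simp)
  obtain ⟨M, _, _, σ, β, hfinrank, hβ, hσ⟩ := exists_quadratic_extension hα
  have : Module.Finite L M := Module.finite_of_finrank_pos (hfinrank ▸ two_pos)
  have : NumberField M := NumberField.of_module_finite L M
  have hβint : IsIntegral ℤ β :=
    IsIntegral.of_pow two_pos (hβ ▸ α.isIntegral_coe.algebraMap)
  obtain ⟨P, hP, hsplit⟩ := exists_notMem_not_hasTwoDegreeOnePrimesAbove M
    (ne_top_of_le_ne_top (ENNReal.add_ne_top.2 ⟨tsum_primeWeight_not_prime_ne_top L,
      tsum_primeWeight_ne_top_of_finite (hfin.union (finite_setOf_mem_asIdeal h2α)) 1⟩)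
      (ENNReal.tsum_union_le (primeWeight L 1) _ _))
  simp only [Set.mem_union, Set.mem_ofPred_eq, not_or, not_not, not_and, not_forall] at hP
  obtain ⟨x, hx⟩ := hP.2.1 hP.1
  exact hsplit (hasTwoDegreeOnePrimesAbove_of_sq_sub_mem hfinrank σ (β := ⟨β, hβint⟩)
    (RingOfIntegers.ext hβ) hσ hx hP.2.2)

lemma infinite_setOf_forall_one_le_valuation_sq_sub {α : L} (hα : ¬ IsSquare α) :
    {P : HeightOneSpectrum (𝓞 L) | (Ideal.absNorm P.asIdeal).Prime ∧
      ∀ x : L, 1 ≤ P.valuation L (x ^ 2 - α)}.Infinite := by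
  obtain ⟨a, d, hd, rfl⟩ := IsFractionRing.div_surjective (A := 𝓞 L) α
  have hd0 : d ≠ 0 := nonZeroDivisors.ne_zero hd
  have hdL : algebraMap (𝓞 L) L d ≠ 0 := RingOfIntegers.coe_ne_zero_iff.2 hd0
  have had : ¬ IsSquare (algebraMap (𝓞 L) L (a * d)) := by
    rintro ⟨b, hb⟩
    refine hα ⟨b / algebraMap (𝓞 L) L d, ?_⟩
    rw [div_mul_div_comm, ← hb, map_mul, mul_div_mul_right _ _ hdL]
  refine ((infinite_setOf_forall_sq_sub_notMem had).sdiff (finite_setOf_mem_asIdeal hd0)).mono ?_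
  rintro P ⟨⟨hprime, hsq⟩, hdP⟩
  refine ⟨hprime, fun x => ?_⟩
  by_contra! hx
  have hdx : P.valuation L ((algebraMap (𝓞 L) L d * x) ^ 2 - algebraMap (𝓞 L) L (a * d)) < 1 := by
    have key : (algebraMap (𝓞 L) L d * x) ^ 2 - algebraMap (𝓞 L) L (a * d) =
        algebraMap (𝓞 L) L d ^ 2 * (x ^ 2 - algebraMap (𝓞 L) L a / algebraMap (𝓞 L) L d) := by
      rw [map_mul]
      field_simp
    rwa [key, map_mul, map_pow, (P.valuation_eq_one_iff_notMem (K := L)).2 hdP, one_pow, one_mul]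
  obtain ⟨y, hy⟩ := exists_sq_sub_mem_of_valuation_lt_one hdx
  exact hsq y hy

end NonsquareModPrime

section LocalObstruction

/-- The value `a` is represented over `R` by the principal form `[1, 0, -c]`. -/
def PrincipalFormRepresents {R : Type*} [CommRing R] (c a : R) : Prop :=
  ∃ x y, a = x ^ 2 - c * y ^ 2

/-- The primes `q` having a residue class modulo `q` on which the predicate `P` holds. -/
def residueClassPrimes (P : ℤ → Prop) : Set ℕ :=
  {q | q.Prime ∧ ∃ m : ℤ, ∀ n : ℤ, n ≡ m [ZMOD q] → P n}

lemma valuation_aeval_sub_aeval_le {R F Γ₀ : Type*} [CommRing R] [CommRing F] [Algebra R F]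
    [LinearOrderedCommGroupWithZero Γ₀] (v : Valuation F Γ₀) (hR : ∀ r, v (algebraMap R F r) ≤ 1)
    {x y : F} (hx : v x ≤ 1) (hy : v y ≤ 1) (p : R[X]) :
    v (aeval x p - aeval y p) ≤ v (x - y) := by
  let φ : R →+* v.integer := (algebraMap R F).codRestrict v.integer hR
  have heval (z : v.integer) : ((Polynomial.eval z (p.map φ) : v.integer) : F) =
      aeval (z : F) p := by
    rw [eval_map, aeval_def]
    exact hom_eval₂ p φ v.integer.subtype z
  obtain ⟨z, hz⟩ := sub_dvd_eval_sub (⟨x, hx⟩ : v.integer) ⟨y, hy⟩ (p.map φ)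
  have hz' := congrArg (fun w : v.integer => (w : F)) hz
  simp only [AddSubgroupClass.coe_sub, MulMemClass.coe_mul, heval] at hz'
  rw [hz', map_mul]
  exact mul_le_of_le_one_right' z.2

lemma not_principalFormRepresents_eval {R F Γ₀ : Type*} [CommRing R] [CommRing F] [Algebra R F]
    [LinearOrderedCommGroupWithZero Γ₀] (v : Valuation F Γ₀)
    (hR : ∀ r : R, v (algebraMap R F r) ≤ 1) {θ : F} (hθ : v θ ≤ 1) {f a : R[X]}
    (hf : aeval θ f = 0) (ha : ∀ x, 1 ≤ v (x ^ 2 - aeval θ a)) {n : R}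
    (hn : v (algebraMap R F n - θ) < 1) :
    ¬ PrincipalFormRepresents (f.eval n) (a.eval n) := by
  have close (p : R[X]) : v (algebraMap R F (p.eval n) - aeval θ p) < 1 := by
    rw [← aeval_algebraMap_apply_eq_algebraMap_eval]
    exact (valuation_aeval_sub_aeval_le v hR (hR n) hθ p).trans_lt hn
  rintro ⟨x, y, hxy⟩
  refine (ha (algebraMap R F x)).not_gt ?_
  have key : algebraMap R F x ^ 2 - aeval θ a = (algebraMap R F (a.eval n) - aeval θ a) +
      (algebraMap R F (f.eval n) - aeval θ f) * algebraMap R F (y ^ 2) := by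
    rw [hf, hxy]
    simp only [map_sub, map_mul, map_pow]
    ring
  rw [key]
  refine Valuation.map_add_lt _ (close a) ?_
  rw [map_mul]
  exact mul_lt_one_of_lt_of_le (close f) (hR _)

variable {L : Type*} [Field L] [NumberField L]

lemma exists_int_valuation_sub_lt_one {P : HeightOneSpectrum (𝓞 L)}
    (hP : (Ideal.absNorm P.asIdeal).Prime) {θ : L} (hθ : P.valuation L θ ≤ 1) :
    ∃ m : ℤ, P.valuation L (m - θ) < 1 := by
  have : Fact (Ideal.absNorm P.asIdeal).Prime := ⟨hP⟩
  have : Nontrivial (𝓞 L ⧸ P.asIdeal) := Ideal.Quotient.nontrivial_iff.2 P.isPrime.ne_top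
  obtain ⟨y, hy⟩ := P.exists_valuation_sub_lt_of_integer hθ 1
  obtain ⟨m, hm⟩ := mem_zmultiples_of_prime_card (p := Ideal.absNorm P.asIdeal) rfl
    (one_ne_zero (α := 𝓞 L ⧸ P.asIdeal)) (g' := Ideal.Quotient.mk P.asIdeal y)
  have hmem : (m : 𝓞 L) - y ∈ P.asIdeal := by
    rw [← Ideal.Quotient.mk_eq_mk_iff_sub_mem, ← hm, map_intCast]
    exact (zsmul_one m).symm
  have hmy := (P.valuation_lt_one_iff_mem (K := L) _).2 hmem
  refine ⟨m, ?_⟩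
  have key : (m : L) - θ =
      algebraMap (𝓞 L) L (m - y) + (algebraMap (𝓞 L) L y - θ) := by
    rw [map_sub, map_intCast, sub_add_sub_cancel]
  rw [key]
  exact Valuation.map_add_lt _ hmy hy

lemma valuation_intCast_sub_lt_one_of_modEq {P : HeightOneSpectrum (𝓞 L)} {m n : ℤ}
    (h : n ≡ m [ZMOD Ideal.absNorm P.asIdeal]) : P.valuation L (n - m) < 1 := by
  obtain ⟨k, hk⟩ := h.symm.dvd
  have hmem : ((n - m : ℤ) : 𝓞 L) ∈ P.asIdeal := by
    rw [hk, Int.cast_mul, Int.cast_natCast]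
    exact Ideal.mul_mem_right _ _ (Ideal.absNorm_mem _)
  simpa using (P.valuation_lt_one_iff_mem (K := L) _).2 hmem

lemma infinite_residueClassPrimes_not_principalFormRepresents {R : Type*} [CommRing R] [Algebra R L]
    (hR : {P : HeightOneSpectrum (𝓞 L) | ∃ r, 1 < P.valuation L (algebraMap R L r)}.Finite)
    {f a : R[X]} {θ : L} (hf : aeval θ f = 0) (ha : ¬ IsSquare (aeval θ a)) :
    (residueClassPrimes fun n =>
      ¬ PrincipalFormRepresents (f.eval (n : R)) (a.eval (n : R))).Infinite := by
  have hinf := (infinite_setOf_forall_one_le_valuation_sq_sub ha).sdiff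
    (hR.union (HeightOneSpectrum.Support.finite (𝓞 L) θ))
  have hfiber (q : ℕ) : {P : HeightOneSpectrum (𝓞 L) | Ideal.absNorm P.asIdeal = q}.Finite :=
    (Ideal.finite_setOfPred_absNorm_eq q).preimage fun P _ P' _ => HeightOneSpectrum.ext
  refine fun hfin => hinf ((hfin.preimage' fun q _ => hfiber q).subset ?_)
  rintro P ⟨⟨hprime, hsq⟩, hP⟩
  simp only [Set.mem_union, HeightOneSpectrum.Support, Set.mem_ofPred_eq, not_or, not_exists,
    not_lt] at hP
  obtain ⟨m, hm⟩ := exists_int_valuation_sub_lt_one hprime hP.2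
  refine ⟨hprime, m, fun n hn => not_principalFormRepresents_eval _ hP.1 hP.2 hf hsq ?_⟩
  rw [map_intCast, ← sub_add_sub_cancel _ (m : L)]
  exact Valuation.map_add_lt _ (valuation_intCast_sub_lt_one_of_modEq hn) hm

end LocalObstruction

section SquarefreeModulus

lemma exists_mul_dvd_sub_sq {R : Type*} [CommRing R] {a b c : R} (hbc : IsCoprime b c)
    (hb : ∃ p, b ∣ a - p ^ 2) (hc : ∃ p, c ∣ a - p ^ 2) : ∃ p, b * c ∣ a - p ^ 2 := by
  obtain ⟨p, s, hp⟩ := hb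
  obtain ⟨p', t, hp'⟩ := hc
  obtain ⟨u, v, huv⟩ := id hbc
  -- the Chinese remainder of `p` modulo `b` and `p'` modulo `c`
  set r := u * b * p' + v * c * p
  refine ⟨r, hbc.mul_dvd ⟨s - u * (p' - p) * (r + p), ?_⟩ ⟨t - v * (p - p') * (r + p'), ?_⟩⟩
  · linear_combination hp - p * (r + p) * huv
  · linear_combination hp' - p' * (r + p') * huv

lemma exists_irreducible_dvd_forall_not_dvd_sub_sq {R : Type*} [CommRing R] [IsDomain R]
    [IsPrincipalIdealRing R] {F a : R} (hF : Squarefree F) (h : ∀ p, ¬ F ∣ a - p ^ 2) :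
    ∃ g, Irreducible g ∧ g ∣ F ∧ ∀ p, ¬ g ∣ a - p ^ 2 := by
  induction F using UniqueFactorizationMonoid.induction_on_prime with
  | h₁ => exact absurd hF not_squarefree_zero
  | h₂ u hu => exact absurd hu.dvd (h 0)
  | h₃ b g _ hg ih =>
    by_cases hgsq : ∀ p, ¬ g ∣ a - p ^ 2
    · exact ⟨g, hg.irreducible, dvd_mul_right g b, hgsq⟩
    have hgb : IsCoprime g b := by
      rw [hg.irreducible.coprime_iff_not_dvd]
      exact fun hdvd => hg.not_isUnit (hF g (mul_dvd_mul_left g hdvd))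
    obtain ⟨q, hq, hqb, hqsq⟩ := ih hF.of_mul_right fun p hp => by
      obtain ⟨p', hp'⟩ := exists_mul_dvd_sub_sq hgb (by simpa using hgsq) ⟨p, hp⟩
      exact h p' hp'
    exact ⟨q, hq, hqb.mul_left g, hqsq⟩

lemma squarefree_map_of_monic {R F : Type*} [CommRing R] [IsDomain R] [IsIntegrallyClosed R]
    [Field F] [Algebra R F] [IsFractionRing R F] {f : R[X]} (hmonic : f.Monic)
    (hsq : Squarefree f) : Squarefree (f.map (algebraMap R F)) := by
  classical
  have hinj := FaithfulSMul.algebraMap_injective R F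
  rw [squarefree_iff_irreducible_sq_not_dvd_of_ne_zero (hmonic.map _).ne_zero]
  intro g hg hgf
  have hnorm := normalize_associated g
  have hdvd : normalize g * normalize g ∣ f.map (algebraMap R F) :=
    (hnorm.mul_mul hnorm).dvd.trans hgf
  have hgmonic : (normalize g).Monic := monic_normalize hg.ne_zero
  obtain ⟨g', hg'⟩ := IsIntegrallyClosed.eq_map_mul_C_of_dvd F hmonic (dvd_of_mul_left_dvd hdvd)
  rw [hgmonic.leadingCoeff, C_1, mul_one] at hg'
  rw [← hg'] at hdvd hgmonic hnorm
  have hg'monic : g'.Monic := monic_of_injective hinj hgmonic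
  have hg'unit : IsUnit g' :=
    hsq g' ((map_dvd_map _ hinj (hg'monic.mul hg'monic)).1 (by rwa [Polynomial.map_mul]))
  exact hg.not_isUnit (hnorm.isUnit (hg'unit.map (mapRingHom (algebraMap R F))))

end SquarefreeModulus

section SUnits

variable {R : Type*} [CommRing R] [IsDedekindDomain R] {F : Type*} [Field F] [Algebra R F]
  [IsFractionRing R F]

lemma exists_unit_map_eq_of_forall_valuation_eq_one {x : Fˣ}
    (hx : ∀ v : HeightOneSpectrum R, v.valuation F x = 1) :
    ∃ u : Rˣ, Units.map (algebraMap R F : R →* F) u = x := by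
  obtain ⟨a, ha⟩ := HeightOneSpectrum.mem_integers_of_valuation_le_one F x fun v => (hx v).le
  obtain ⟨b, hb⟩ := HeightOneSpectrum.mem_integers_of_valuation_le_one F ↑x⁻¹ fun v => by
    rw [Units.val_inv_eq_inv_val, map_inv₀, hx v, inv_one]
  have hab : a * b = 1 := FaithfulSMul.algebraMap_injective R F <| by
    rw [map_mul, ha, hb, map_one, Units.mul_inv]
  exact ⟨Units.mkOfMulEqOne a b hab, Units.ext ha⟩

variable (F) in
/-- The family of `v`-adic valuations of an `S`-unit at the places of `S`, written additively. -/
noncomputable def sUnitValuations (S : Set (HeightOneSpectrum R)) :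
    Additive (S.unit F) →ₗ[ℤ] S → ℤ :=
  LinearMap.pi fun v => (MonoidHom.toAdditiveLeft
    (v.1.valuationOfNeZero.comp (S.unit F).subtype)).toIntLinearMap

lemma sUnitValuations_eq_zero_iff {S : Set (HeightOneSpectrum R)} {x : S.unit F} :
    sUnitValuations F S (.ofMul x) = 0 ↔
      ∀ v : HeightOneSpectrum R, v.valuation F (x : Fˣ) = 1 := by
  have hval (v : HeightOneSpectrum R) :
      v.valuation F (x : Fˣ) = 1 ↔ v.valuationOfNeZero (x : Fˣ) = 1 := by
    rw [← v.valuationOfNeZero_eq, ← WithZero.coe_one, WithZero.coe_inj]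
  have happly (v : S) :
      sUnitValuations F S (.ofMul x) v = (v.1.valuationOfNeZero (x : Fˣ)).toAdd := rfl
  simp only [funext_iff, happly, Pi.zero_apply, toAdd_eq_zero, ← hval, Subtype.forall]
  exact ⟨fun h v => by_cases (h v) (S.unit_valuation_eq_one F x), fun h v _ => h v⟩

lemma finite_additive_sUnit [Module.Finite ℤ (Additive Rˣ)] {S : Set (HeightOneSpectrum R)}
    (hS : S.Finite) : Module.Finite ℤ (Additive (S.unit F)) := by
  have : Finite S := hS
  have hmap (u : Rˣ) (v : HeightOneSpectrum R) :
      v.valuation F (Units.map (algebraMap R F : R →* F) u) = 1 := by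
    rw [← v.valuationOfNeZero_eq, v.valuation_of_unit_eq, WithZero.coe_one]
  let ι : Rˣ →* S.unit F :=
    (Units.map (algebraMap R F : R →* F)).codRestrict (S.unit F) fun u v _ => hmap u v
  have : IsNoetherian ℤ (Additive (S.unit F)) :=
    isNoetherian_of_range_eq_ker ι.toAdditive.toIntLinearMap (sUnitValuations F S) <| by
      ext x
      refine Iff.trans ⟨?_, fun hx => ?_⟩ sUnitValuations_eq_zero_iff.symm
      · rintro ⟨u, rfl⟩
        exact hmap u.toMul
      · obtain ⟨u, hu⟩ := exists_unit_map_eq_of_forall_valuation_eq_one hx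
        exact ⟨.ofMul u, Additive.toMul.injective (Subtype.ext hu)⟩
  infer_instance

lemma exists_finset_forall_eq_mul_sq (G : Type*) [CommGroup G] [Group.FG G] :
    ∃ T : Finset G, ∀ u : G, ∃ t ∈ T, ∃ w : G, u = t * w ^ 2 := by
  have := Subgroup.finiteIndex_range_powMonoidHom_of_fg G two_ne_zero
  obtain ⟨T, hT, -⟩ := (powMonoidHom 2 : G →* G).range.exists_isComplement_left 1
  refine ⟨Set.Finite.toFinset (hT.finite_left_iff.2 inferInstance), fun u => ?_⟩
  obtain ⟨⟨t, _, w, rfl⟩, rfl⟩ := (hT.existsUnique u).exists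
  exact ⟨t, (Set.Finite.mem_toFinset _).2 t.2, w, rfl⟩

end SUnits

section SIntegers

variable {K : Type*} [Field K] [NumberField K] (S : Finset (HeightOneSpectrum (𝓞 K)))

lemma group_fg_units_sInt : Group.FG (SInt K S)ˣ := by
  have : Module.Finite ℤ (Additive ((S : Set (HeightOneSpectrum (𝓞 K))).unit K)) :=
    finite_additive_sUnit S.finite_toSet
  have := GroupFG.iff_add_fg.2 (Module.Finite.iff_addGroup_fg.1 this)
  exact Group.fg_of_surjective
    (f := ((S : Set (HeightOneSpectrum (𝓞 K))).unitEquivUnitsInteger K).toMonoidHom)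
    (MulEquiv.surjective _)

lemma finite_setOf_exists_one_lt_valuation_sInt (L : Type*) [Field L] [NumberField L]
    [Algebra K L] :
    {P : HeightOneSpectrum (𝓞 L) |
      ∃ r : SInt K S, 1 < P.valuation L (algebraMap (SInt K S) L r)}.Finite := by
  have hfiber (v : HeightOneSpectrum (𝓞 K)) :
      {P : HeightOneSpectrum (𝓞 L) | P.under (𝓞 K) = v}.Finite := by
    refine ((IsDedekindDomain.primesOver_finite v.asIdeal (𝓞 L)).preimage
      fun P _ P' _ => HeightOneSpectrum.ext).subset ?_
    rintro P rfl
    exact ⟨P.isPrime, ⟨rfl⟩⟩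
  refine (S.finite_toSet.preimage' fun v _ => hfiber v).subset ?_
  rintro P ⟨r, hr⟩
  by_contra hP
  have : P.asIdeal.LiesOver (P.under (𝓞 K)).asIdeal := ⟨rfl⟩
  refine hr.not_ge ?_
  rw [IsScalarTower.algebraMap_apply (SInt K S) K L,
    ← HeightOneSpectrum.valuation_liesOver L (P.under (𝓞 K)) P]
  exact pow_le_one' (r.2 _ hP) _

variable {S}

lemma infinite_residueClassPrimes_sInt {f a : (SInt K S)[X]}
    (hf : Squarefree (f.map (algebraMap (SInt K S) K)))
    (ha : ∀ p : K[X], ¬ f.map (algebraMap (SInt K S) K) ∣ a.map (algebraMap (SInt K S) K) - p ^ 2) :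
    (residueClassPrimes fun n =>
      ¬ PrincipalFormRepresents (f.eval (n : SInt K S)) (a.eval (n : SInt K S))).Infinite := by
  obtain ⟨g, hg, hgf, hga⟩ := exists_irreducible_dvd_forall_not_dvd_sub_sq hf ha
  have : Fact (Irreducible g) := ⟨hg⟩
  have : Module.Finite K (AdjoinRoot g) := (AdjoinRoot.powerBasis hg.ne_zero).finite
  have : NumberField (AdjoinRoot g) := NumberField.of_module_finite K (AdjoinRoot g)
  have haeval (p : (SInt K S)[X]) : aeval (AdjoinRoot.root g) p =
      AdjoinRoot.mk g (p.map (algebraMap (SInt K S) K)) := by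
    rw [← AdjoinRoot.aeval_eq, aeval_map_algebraMap]
  refine infinite_residueClassPrimes_not_principalFormRepresents
    (finite_setOf_exists_one_lt_valuation_sInt S (AdjoinRoot g)) (θ := AdjoinRoot.root g) ?_ ?_
  · rwa [haeval, AdjoinRoot.mk_eq_zero]
  · rw [haeval, isSquare_iff_exists_sq]
    rintro ⟨b, hb⟩
    obtain ⟨p, rfl⟩ := AdjoinRoot.mk_surjective b
    refine hga p ?_
    rw [← AdjoinRoot.mk_eq_zero, map_sub, map_pow, hb, sub_self]

end SIntegers

section Specialization

lemma exists_int_modEq_imp_forall_mem {ι : Type*} (T : Finset ι) {P : ι → ℤ → Prop}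
    (h : ∀ i ∈ T, (residueClassPrimes (P i)).Infinite) :
    ∃ (Q : ℕ) (m : ℤ), Q ≠ 0 ∧ ∀ n : ℤ, n ≡ m [ZMOD Q] → ∀ i ∈ T, P i n := by
  classical
  induction T using Finset.induction_on with
  | empty => exact ⟨1, 0, one_ne_zero, by simp⟩
  | insert i T _ ih =>
    simp only [Finset.forall_mem_insert] at h ⊢
    obtain ⟨Q, m, hQ, hm⟩ := ih h.2
    obtain ⟨q, ⟨hq, m', hm'⟩, hlt⟩ := h.1.exists_gt Q
    have hcop : Q.Coprime q := (Nat.coprime_of_lt_prime hQ hlt hq).symm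
    obtain ⟨u, v, huv⟩ := Nat.isCoprime_iff_coprime.2 hcop
    set r : ℤ := u * Q * m' + v * q * m
    have hrm : r ≡ m [ZMOD Q] :=
      Int.modEq_iff_dvd.2 ⟨u * (m - m'), by linear_combination -m * huv⟩
    have hrm' : r ≡ m' [ZMOD q] :=
      Int.modEq_iff_dvd.2 ⟨v * (m' - m), by linear_combination -m' * huv⟩
    refine ⟨Q * q, r, mul_ne_zero hQ hq.ne_zero, fun n hn => ?_⟩
    rw [Nat.cast_mul] at hn
    exact ⟨hm' n ((hn.of_mul_left _).trans hrm'), hm n ((hn.of_mul_right _).trans hrm)⟩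

lemma infinite_setOf_forall_mem_of_residueClassPrimes {ι : Type*} (T : Finset ι)
    {P : ι → ℤ → Prop} (h : ∀ i ∈ T, (residueClassPrimes (P i)).Infinite) :
    {n : ℤ | ∀ i ∈ T, P i n}.Infinite := by
  obtain ⟨Q, m, hQ, hm⟩ := exists_int_modEq_imp_forall_mem T h
  refine Set.infinite_of_injective_forall_mem (f := fun j : ℤ => m + Q * j) (fun i j hij => ?_)
    fun j => hm _ Int.modEq_add_fac_self
  exact mul_left_cancel₀ (Nat.cast_ne_zero.2 hQ) (add_left_cancel hij)

lemma PrincipalFormRepresents.of_mul_sq {R : Type*} [CommRing R] {c a : R} (w : Rˣ)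
    (h : PrincipalFormRepresents c (a * (w : R) ^ 2)) : PrincipalFormRepresents c a := by
  obtain ⟨x, y, hxy⟩ := h
  refine ⟨↑w⁻¹ * x, ↑w⁻¹ * y, ?_⟩
  linear_combination (↑w⁻¹ : R) ^ 2 * hxy - a * (w * (↑w⁻¹ : R) + 1) * w.mul_inv

lemma not_dvd_C_mul_sub_sq_of_forall_not_dvd_sub_C_mul_sq {F : Type*} [Field F] {f a : F[X]}
    (h : ¬ ∃ ε : F, ε ≠ 0 ∧ ∃ p : F[X], f ∣ a - C ε * p ^ 2) {t : F} (ht : t ≠ 0) (p : F[X]) :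
    ¬ f ∣ C t * a - p ^ 2 := by
  refine fun hp => h ⟨t⁻¹, inv_ne_zero ht, p, ?_⟩
  have hCt : C t⁻¹ * C t = 1 := by rw [← C_mul, inv_mul_cancel₀ ht, C_1]
  convert! hp.mul_left (C t⁻¹) using 1
  linear_combination -a * hCt

end Specialization

theorem infinitely_many_nontrivial_specializations_general (K : Type*) [Field K] [NumberField K]
    (S : Finset (HeightOneSpectrum (𝓞 K))) (f A B C : (SInt K S)[X])
    (hsqfree : Squarefree (f.map (algebraMap (SInt K S) K)))
    (hgenus : ¬ ∃ ε : K, ε ≠ 0 ∧ ∃ p : K[X], f.map (algebraMap (SInt K S) K) ∣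
      A.map (algebraMap (SInt K S) K) - Polynomial.C ε * p ^ 2) :
    {n : SInt K S | ¬ ∃ M : Matrix (Fin 2) (Fin 2) (SInt K S), IsUnit M.det ∧
      ∀ x y : SInt K S,
        M.det * (A.eval n * x ^ 2 + 2 * B.eval n * x * y + C.eval n * y ^ 2) =
          (M 0 0 * x + M 0 1 * y) ^ 2 - f.eval n * (M 1 0 * x + M 1 1 * y) ^ 2}.Infinite := by
  have := group_fg_units_sInt S
  obtain ⟨T, hT⟩ := exists_finset_forall_eq_mul_sq (SInt K S)ˣ
  have hobs : ∀ t ∈ T, (residueClassPrimes fun n => ¬ PrincipalFormRepresents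
      (f.eval (n : SInt K S))
      ((Polynomial.C (t : SInt K S) * A).eval (n : SInt K S))).Infinite := by
    refine fun t _ => infinite_residueClassPrimes_sInt hsqfree fun p => ?_
    rw [Polynomial.map_mul, map_C]
    refine not_dvd_C_mul_sub_sq_of_forall_not_dvd_sub_C_mul_sq hgenus ?_ p
    exact (map_ne_zero_iff _ Subtype.val_injective).2 t.ne_zero
  have hinf := infinite_setOf_forall_mem_of_residueClassPrimes T hobs
  refine (hinf.image (Int.cast_injective (α := SInt K S)).injOn).mono ?_
  rintro _ ⟨n, hn, rfl⟩ ⟨M, ⟨u, hu⟩, hM⟩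
  obtain ⟨t, ht, w, rfl⟩ := hT u
  refine hn t ht (.of_mul_sq w ⟨M 0 0, M 1 0, ?_⟩)
  have h10 := hM 1 0
  rw [← hu] at h10
  simp only [eval_mul, eval_C]
  push_cast at h10
  linear_combination h10

/-- **Infinitely many non-trivial specializations.**
`K` a number field, `f ∈ O_K[X]` monic squarefree of odd degree `≥ 3`, `S` a
finite set of primes with `O = O_{K,S}` a PID. Let `[A,2B,C]` be a primitive
form over `O[X]` with `B² − AC = f` and `A` coprime to `f` in `K[X]`, which is
not in the principal genus over `K[X]` (no `ε ∈ Kˣ`, `p ∈ K[X]` satisfy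
`f ∣ A − ε·p²`). Then there are infinitely many `n ∈ O` such that the
specialized form `[A(n), 2B(n), C(n)]` is not `GL₂ᵗʷ`-equivalent over `O` to
the principal form `[1, 0, −f(n)]`. -/
theorem infinitely_many_nontrivial_specializations
    (K : Type*) [Field K] [NumberField K]
    (S : Finset (HeightOneSpectrum (𝓞 K)))
    (hPID : IsPrincipalIdealRing (SInt K S))
    (f : Polynomial (𝓞 K)) (hmonic : f.Monic) (hsqfree : Squarefree f)
    (hodd : Odd f.natDegree) (hdeg : 3 ≤ f.natDegree)
    (A B C : Polynomial (SInt K S))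
    (hrel : B ^ 2 - A * C = f.map (algebraMap (𝓞 K) (SInt K S)))
    (hprim : Ideal.span {A, 2 * B, C} = (⊤ : Ideal (Polynomial (SInt K S))))
    (hcop : IsCoprime (A.map (algebraMap (SInt K S) K)) (f.map (algebraMap (𝓞 K) K)))
    (hgenus : ¬ ∃ ε : K, ε ≠ 0 ∧ ∃ p : K[X],
        (f.map (algebraMap (𝓞 K) K)) ∣
          (A.map (algebraMap (SInt K S) K) - Polynomial.C ε * p ^ 2)) :
    {n : SInt K S |
      ¬ ∃ M : Matrix (Fin 2) (Fin 2) (SInt K S), IsUnit M.det ∧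
        ∀ x y : SInt K S,
          M.det * (A.eval n * x ^ 2 + 2 * B.eval n * x * y + C.eval n * y ^ 2) =
            (M 0 0 * x + M 0 1 * y) ^ 2
              - (f.map (algebraMap (𝓞 K) (SInt K S))).eval n
                * (M 1 0 * x + M 1 1 * y) ^ 2}.Infinite := by
  have hmap : (f.map (algebraMap (𝓞 K) (SInt K S))).map (algebraMap (SInt K S) K) =
      f.map (algebraMap (𝓞 K) K) := by
    rw [Polynomial.map_map, ← IsScalarTower.algebraMap_eq]
  exact infinitely_many_nontrivial_specializations_general K S _ A B C
    (hmap ▸ squarefree_map_of_monic hmonic hsqfree) (hmap ▸ hgenus)
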